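/- arXiv:math/0401300 — 2 statements merged into one kernel-verified Lean document; each statement's English description precedes it below -/
import Mathlib

section
/- For all integers 0 ≤ j ≤ k+1, the identity (1 − C̃^{k+2}) · Ĝ_k^{(j)} = t^j · (1 + C̃)^{j+1} · (1 − C̃^{k−j+1}) holds in ℚ[[t]]. -/
/-- A ballot path: a sequence of steps, each `+1` or `-1`, all of whose
partial sums are nonnegative. -/
def IsBallot (P : List ℤ) : Prop :=
  (∀ s ∈ P, s = 1 ∨ s = -1) ∧ ∀ k, 0 ≤ (P.take k).sum

/-- The height of a path: the maximum of its partial sums (`0` for the empty path). -/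
def pathHeight (P : List ℤ) : ℤ :=
  (((List.range (P.length + 1)).map fun k => (P.take k).sum).foldr max 0)

/-- `Ghat k j` is the generating function (in `t`, counting by number of steps)
for ballot paths of height at most `k` ending at level `j`. -/
noncomputable def Ghat (k j : ℕ) : PowerSeries ℚ :=
  PowerSeries.mk fun N =>
    (Nat.card {P : List ℤ //
      IsBallot P ∧ P.length = N ∧ P.sum = (j : ℤ) ∧ pathHeight P ≤ (k : ℤ)} : ℚ)

/-- The power series `C̃ = ∑_{n ≥ 1} (catalan n) t^{2n}`. -/
def catalanSeriesT : PowerSeries ℚ :=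
  PowerSeries.mk fun n => if n % 2 = 0 ∧ n ≠ 0 then (catalan (n / 2) : ℚ) else 0

/-!
Deleting the last step of a path shows that the series `Ghat k j` satisfy the tridiagonal system
`F 0 = a + X * F 1`, `F j = X * (F (j - 1) + F (j + 1))`, `F (k + 1) = 0` with `a = 1`. Such a
system determines `F`, since it expresses each coefficient through coefficients of lower degree.

With `u = X * (1 + C̃)`, the Catalan equation says `C̃ = u ^ 2`, so `u` and `u⁻¹` are the roots of
`X * z ^ 2 - z + X`. The combination of `u ^ j` and `u ^ (-j)` that vanishes at `j = k + 1` solves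
the recurrence; scaled to `(1 + C̃) * (u ^ j - u ^ (2 * (k + 1) - j))` it is the right-hand side of
the identity, and its source term is `a = 1 - C̃ ^ (k + 2)`.
-/

open PowerSeries

section Paths

/-- The walks on `ℤ` from `0` to `j` with `N` steps, each `1` or `-1`, that never leave `S`. The
partial sums are the sums of the prefixes; the empty prefix counts, so there are none if `0 ∉ S`. -/
def confinedPaths (S : Set ℤ) (N : ℕ) (j : ℤ) : Set (List ℤ) :=
  {P | (∀ s ∈ P, s = 1 ∨ s = -1) ∧ (∀ Q, Q <+: P → Q.sum ∈ S) ∧ P.length = N ∧ P.sum = j}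

variable {S : Set ℤ} {j : ℤ} (N : ℕ)

theorem confinedPaths_eq_empty (hj : j ∉ S) : confinedPaths S N j = ∅ :=
  Set.eq_empty_of_forall_notMem fun P ⟨_, hS, _, hsum⟩ ↦ hj (hsum ▸ hS P List.prefix_rfl)

theorem confinedPaths_zero_zero (h0 : 0 ∈ S) : confinedPaths S 0 0 = {[]} := by
  ext P
  constructor
  · exact fun hP ↦ List.length_eq_zero_iff.mp hP.2.2.1
  · rintro rfl
    simp [confinedPaths, h0]

theorem confinedPaths_zero_of_ne (hj : j ≠ 0) : confinedPaths S 0 j = ∅ := by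
  ext P
  simp +contextual [confinedPaths, hj.symm]

theorem concat_mem_confinedPaths_iff {P : List ℤ} {s : ℤ} :
    P ++ [s] ∈ confinedPaths S (N + 1) j ↔
      j ∈ S ∧ (s = 1 ∨ s = -1) ∧ P ∈ confinedPaths S N (j - s) := by
  simp only [confinedPaths, Set.mem_ofPred_eq, List.prefix_concat_iff, List.forall_mem_append,
    List.forall_mem_singleton, forall_eq_or_imp, List.length_append, List.length_singleton,
    List.sum_append, List.sum_singleton, Nat.add_right_cancel_iff, eq_sub_iff_add_eq]
  constructor
  · rintro ⟨⟨hP, hs⟩, ⟨hj, hS⟩, hlen, rfl⟩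
    exact ⟨hj, hs, hP, hS, hlen, rfl⟩
  · rintro ⟨hj, hs, hP, hS, hlen, rfl⟩
    exact ⟨⟨hP, hs⟩, ⟨hj, hS⟩, hlen, rfl⟩

theorem confinedPaths_succ (hj : j ∈ S) :
    confinedPaths S (N + 1) j =
      (· ++ [1]) '' confinedPaths S N (j - 1) ∪ (· ++ [-1]) '' confinedPaths S N (j + 1) := by
  ext P
  rcases List.eq_nil_or_concat P with rfl | ⟨Q, s, rfl⟩
  · simp [confinedPaths]
  · simp only [List.concat_eq_append, concat_mem_confinedPaths_iff, hj, true_and, Set.mem_union,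
      Set.mem_image, List.append_singleton_inj]
    aesop

theorem finite_confinedPaths (S : Set ℤ) (j : ℤ) : (confinedPaths S N j).Finite := by
  induction N generalizing j with
  | zero =>
    exact (Set.finite_singleton []).subset fun P hP ↦ List.length_eq_zero_iff.mp hP.2.2.1
  | succ N ih =>
    by_cases hj : j ∈ S
    · rw [confinedPaths_succ N hj]
      exact ((ih _).image _).union ((ih _).image _)
    · simp [confinedPaths_eq_empty _ hj]

theorem ncard_confinedPaths_succ (hj : j ∈ S) :
    (confinedPaths S (N + 1) j).ncard =
      (confinedPaths S N (j - 1)).ncard + (confinedPaths S N (j + 1)).ncard := by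
  have hdisj : Disjoint ((· ++ [1]) '' confinedPaths S N (j - 1))
      ((· ++ [-1]) '' confinedPaths S N (j + 1)) := by
    rw [Set.disjoint_left]
    rintro _ ⟨P, -, rfl⟩ ⟨Q, -, hPQ⟩
    simp [List.append_singleton_inj] at hPQ
  rw [confinedPaths_succ N hj, Set.ncard_union_eq hdisj ((finite_confinedPaths N S _).image _)
      ((finite_confinedPaths N S _).image _),
    Set.ncard_image_of_injective _ (List.append_left_injective _),
    Set.ncard_image_of_injective _ (List.append_left_injective _)]

end Paths

section Height

theorem foldr_max_le_iff {α : Type*} [LinearOrder α] {l : List α} {a b : α} :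
    l.foldr max b ≤ a ↔ b ≤ a ∧ ∀ x ∈ l, x ≤ a := by
  induction l with
  | nil => simp
  | cons x l ih => simp [ih, and_left_comm]

theorem pathHeight_le_iff {P : List ℤ} {h : ℤ} :
    pathHeight P ≤ h ↔ ∀ Q, Q <+: P → Q.sum ≤ h := by
  simp only [pathHeight, foldr_max_le_iff, List.forall_mem_map, List.mem_range]
  constructor
  · rintro ⟨-, hP⟩ Q hQ
    rw [List.prefix_iff_eq_take.mp hQ]
    exact hP Q.length (Nat.lt_succ_of_le hQ.length_le)
  · intro hP
    exact ⟨by simpa using hP [] P.nil_prefix, fun m _ ↦ hP _ (P.take_prefix m)⟩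

theorem isBallot_iff {P : List ℤ} :
    IsBallot P ↔ (∀ s ∈ P, s = 1 ∨ s = -1) ∧ ∀ Q, Q <+: P → 0 ≤ Q.sum := by
  refine and_congr_right fun _ ↦ ⟨fun hP Q hQ ↦ ?_, fun hP m ↦ hP _ (P.take_prefix m)⟩
  rw [List.prefix_iff_eq_take.mp hQ]
  exact hP Q.length

theorem mem_confinedPaths_Icc_iff {h j : ℤ} {N : ℕ} {P : List ℤ} :
    P ∈ confinedPaths (Set.Icc 0 h) N j ↔
      IsBallot P ∧ P.length = N ∧ P.sum = j ∧ pathHeight P ≤ h := by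
  simp only [confinedPaths, Set.mem_ofPred_eq, Set.mem_Icc, isBallot_iff, pathHeight_le_iff,
    forall_and]
  tauto

theorem coeff_Ghat (k j N : ℕ) :
    coeff N (Ghat k j) = ((confinedPaths (Set.Icc 0 k) N j).ncard : ℚ) := by
  simp only [Ghat, coeff_mk, ← mem_confinedPaths_Icc_iff]
  exact congrArg Nat.cast (Nat.card_coe_set_eq _)

end Height

section StripSystem

/-- The transfer system of the strip of levels `0, …, k`, with source term `a` at level `0`: for
`a = 1` it is what removing the last step gives for the generating functions `F j` of the paths in
the strip ending at level `j`. Level `k + 1` is included as an absorbing boundary, so that the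
recurrence at level `k` is not a special case; values of `F` above it are irrelevant. -/
structure IsStripSystem {R : Type*} [Semiring R] (k : ℕ) (a : R⟦X⟧) (F : ℕ → R⟦X⟧) : Prop where
  bottom : F 0 = a + X * F 1
  step : ∀ j < k, F (j + 1) = X * (F j + F (j + 2))
  top : F (k + 1) = 0

theorem IsStripSystem.const_mul {R : Type*} [CommSemiring R] {k : ℕ} {a : R⟦X⟧} {F : ℕ → R⟦X⟧}
    (hF : IsStripSystem k a F) (b : R⟦X⟧) : IsStripSystem k (b * a) fun j ↦ b * F j where
  bottom := by rw [hF.bottom]; ring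
  step j hj := by rw [hF.step j hj]; ring
  top := by rw [hF.top, mul_zero]

theorem IsStripSystem.unique {R : Type*} [Semiring R] {k : ℕ} {a : R⟦X⟧} {F G : ℕ → R⟦X⟧}
    (hF : IsStripSystem k a F) (hG : IsStripSystem k a G) {j : ℕ} (hj : j ≤ k + 1) :
    F j = G j := by
  ext N
  induction N generalizing j with
  | zero =>
    rcases hj.eq_or_lt with rfl | hlt
    · rw [hF.top, hG.top]
    · cases j with
      | zero => simp [hF.bottom, hG.bottom]
      | succ j => simp [hF.step j (by omega), hG.step j (by omega)]
  | succ N ih =>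
    rcases hj.eq_or_lt with rfl | hlt
    · rw [hF.top, hG.top]
    · cases j with
      | zero => simp [hF.bottom, hG.bottom, coeff_succ_X_mul, ih (j := 1) (by omega)]
      | succ j =>
        simp [hF.step j (by omega), hG.step j (by omega), coeff_succ_X_mul,
          ih (j := j) (by omega), ih (j := j + 2) (by omega)]

theorem isStripSystem_Ghat (k : ℕ) : IsStripSystem k 1 (Ghat k) where
  bottom := by
    ext N
    cases N with
    | zero => simp [coeff_Ghat, confinedPaths_zero_zero]
    | succ N =>
      have hbelow : confinedPaths (Set.Icc 0 (k : ℤ)) N (-1) = ∅ :=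
        confinedPaths_eq_empty N (by simp)
      simp [coeff_succ_X_mul, coeff_one, coeff_Ghat, ncard_confinedPaths_succ, hbelow]
  step j hj := by
    ext N
    cases N with
    | zero =>
      have hne : ((j + 1 : ℕ) : ℤ) ≠ 0 := by omega
      rw [coeff_zero_X_mul, coeff_Ghat, confinedPaths_zero_of_ne hne, Set.ncard_empty,
        Nat.cast_zero]
    | succ N =>
      have hmem : ((j + 1 : ℕ) : ℤ) ∈ Set.Icc 0 (k : ℤ) := ⟨by omega, by omega⟩
      rw [coeff_succ_X_mul, map_add, coeff_Ghat, coeff_Ghat, coeff_Ghat,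
        ncard_confinedPaths_succ N hmem]
      push_cast
      ring_nf
  top := by
    ext N
    have habove : ((k + 1 : ℕ) : ℤ) ∉ Set.Icc 0 (k : ℤ) := by simp
    rw [coeff_Ghat, confinedPaths_eq_empty N habove, Set.ncard_empty, Nat.cast_zero, map_zero]

theorem isStripSystem_of_eq_X_sq_mul {R : Type*} [CommRing R] {c : R⟦X⟧}
    (hc : c = X ^ 2 * (1 + c) ^ 2) (k : ℕ) :
    IsStripSystem k (1 - c ^ (k + 2))
      fun j ↦ X ^ j * (1 + c) ^ (j + 1) * (1 - c ^ (k + 1 - j)) where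
  bottom := by
    simp only [Nat.add_sub_cancel, Nat.sub_zero]
    linear_combination (1 - c ^ k) * hc
  step j hj := by
    obtain ⟨m, rfl⟩ := Nat.exists_eq_add_of_lt hj
    have hm : j + m + 1 + 1 - (j + 1) = m + 1 ∧ j + m + 1 + 1 - j = m + 2 ∧
        j + m + 1 + 1 - (j + 2) = m := by omega
    simp only [hm]
    linear_combination X ^ (j + 1) * (1 + c) ^ (j + 1) * (1 - c ^ m) * hc
  top := by simp

end StripSystem

section Catalan

theorem one_add_catalanSeriesT :
    1 + catalanSeriesT = expand 2 two_ne_zero (map (Nat.castRingHom ℚ) catalanSeries) := by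
  ext n
  rcases eq_or_ne n 0 with rfl | hn
  · simp [catalanSeriesT, coeff_expand]
  · simp [catalanSeriesT, coeff_expand, coeff_one, hn, Nat.dvd_iff_mod_eq_zero]

theorem catalanSeriesT_eq_X_sq_mul :
    catalanSeriesT = X ^ 2 * (1 + catalanSeriesT) ^ 2 := by
  have h := congrArg (fun f ↦ expand 2 two_ne_zero (map (Nat.castRingHom ℚ) f))
    catalanSeries_sq_mul_X_add_one
  simp only [map_add, map_mul, map_pow, map_one, map_X, expand_X, ← one_add_catalanSeriesT] at h
  linear_combination -h

end Catalan

theorem Ghat_formula (k j : ℕ) (hjk : j ≤ k + 1) :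
    (1 - catalanSeriesT ^ (k + 2)) * Ghat k j =
      PowerSeries.X ^ j * (1 + catalanSeriesT) ^ (j + 1) *
        (1 - catalanSeriesT ^ (k + 1 - j)) := by
  have hGhat : IsStripSystem k (1 - catalanSeriesT ^ (k + 2))
      fun i ↦ (1 - catalanSeriesT ^ (k + 2)) * Ghat k i := by
    simpa using (isStripSystem_Ghat k).const_mul (1 - catalanSeriesT ^ (k + 2))
  exact hGhat.unique (isStripSystem_of_eq_X_sq_mul catalanSeriesT_eq_X_sq_mul k) hjk
end

section
/- For every integer n ≥ 1, T(3, n+1) = N(n) + 2·A_1(n) + 2·A_2(n) + A_3(n) + A_5(n), where: A_j(n) is the number of Dyck paths of semilength n with height at most j; and N(n) is the number of ordered triples (P, Q, R) of ballot paths whose total number of steps is 2n − 1, such that P ends at level 4, Q ends at level 3, R ends at level 2, and the heights satisfy h(Q) = h(P) − 2 and h(R) = h(P) − 4. -/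
/-- A Dyck path of semilength `n`: a ballot path with `2n` steps ending at level `0`. -/
def IsDyck (n : ℕ) (P : List ℤ) : Prop :=
  IsBallot P ∧ P.length = 2 * n ∧ P.sum = 0

/-- The super Catalan number `T(m,n) = (1/2) * (2m)! * (2n)! / (m! * n! * (m+n)!)`,
as a rational number. -/
def superCatalan (m n : ℕ) : ℚ :=
  (Nat.factorial (2 * m) * Nat.factorial (2 * n) : ℚ) /
    (2 * (Nat.factorial m * Nat.factorial n * Nat.factorial (m + n)))

/-- `A j n` is the number of Dyck paths of semilength `n` with height at most `j`. -/
noncomputable def A (j n : ℕ) : ℕ :=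
  Nat.card {P : List ℤ // IsDyck n P ∧ pathHeight P ≤ (j : ℤ)}

/-- `N3 n` is the number of ordered triples `(P, Q, R)` of ballot paths with
`2n - 1` steps in total, with `P` ending at level `4`, `Q` at level `3`, `R` at
level `2`, and heights satisfying `h(Q) = h(P) - 2` and `h(R) = h(P) - 4`. -/
noncomputable def N3 (n : ℕ) : ℕ :=
  Nat.card {T : List ℤ × List ℤ × List ℤ //
    IsBallot T.1 ∧ IsBallot T.2.1 ∧ IsBallot T.2.2 ∧
    T.1.length + T.2.1.length + T.2.2.length = 2 * n - 1 ∧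
    T.1.sum = 4 ∧ T.2.1.sum = 3 ∧ T.2.2.sum = 2 ∧
    pathHeight T.2.1 = pathHeight T.1 - 2 ∧
    pathHeight T.2.2 = pathHeight T.1 - 4}

/-!
Substitute `X = z / (1 + z ^ 2)` and put `q = z ^ 2`. Ballot paths of bounded height then have
closed generating functions, and so do those of exact height, by differences in the height. The
product of the three series belonging to `h(P) = k + 6` is `const * y ^ 3 / (y; q)_6` with
`y = q ^ (k + 3)`, which telescopes: if `B(y)` is the part of degree at most `2` in `y` of
`(y; q)_5`, then `F(y) = B(y) / (y; q)_5` has `F(y) - F(q * y) = const * y ^ 3 / (y; q)_6` and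
`F(y) = 1 + O(y ^ 3)`. The sum over `k` is thus the boundary term at `y = q ^ 3`, which splits
into the bounded-height Dyck series of the `A j` and `(1 + q) ^ 2 * (q ^ 2 - 4 * q + 5)`, up to a
constant term. As `1 + q` is the Catalan series in `X ^ 2`, the coefficients of the latter are
combinations of Catalan numbers, namely `T(3, n + 1)`.
-/

open Finset PowerSeries

section Height

theorem pathHeight_nil : pathHeight [] = 0 := rfl

theorem pathHeight_append_singleton (P : List ℤ) (s : ℤ) :
    pathHeight (P ++ [s]) = max (pathHeight P) (P.sum + s) := by
  have prefix_sums : (List.range (P.length + 1)).map (fun k => ((P ++ [s]).take k).sum) =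
      (List.range (P.length + 1)).map fun k => (P.take k).sum :=
    List.map_congr_left fun k hk => by
      rw [List.take_append_of_le_length (Nat.lt_succ_iff.1 (List.mem_range.1 hk))]
  have total : ((P ++ [s]).take (P.length + 1)).sum = P.sum + s := by
    rw [List.take_of_length_le (by simp), List.sum_append, List.sum_singleton]
  rw [pathHeight, List.length_append, List.length_singleton, List.range_succ, List.map_append,
    prefix_sums, List.map_singleton, total, List.foldr_append, List.foldr_cons, List.foldr_nil,
    max_comm, List.foldr_assoc, pathHeight]

theorem sum_le_pathHeight (P : List ℤ) : P.sum ≤ pathHeight P := by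
  induction P using List.reverseRecOn with
  | nil => rfl
  | append_singleton P s _ => simp [pathHeight_append_singleton]

theorem isBallot_nil : IsBallot [] := by simp [IsBallot]

theorem IsBallot.sum_nonneg {P : List ℤ} (hP : IsBallot P) : 0 ≤ P.sum := by
  simpa using hP.2 P.length

theorem isBallot_append_singleton {P : List ℤ} {s : ℤ} :
    IsBallot (P ++ [s]) ↔ IsBallot P ∧ (s = 1 ∨ s = -1) ∧ 0 ≤ P.sum + s := by
  constructor
  · intro h
    refine ⟨⟨fun x hx => h.1 x (List.mem_append_left _ hx), fun k => ?_⟩,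
      h.1 s (by simp), by simpa using h.sum_nonneg⟩
    rw [List.take_eq_take_min, ← List.take_append_of_le_length (min_le_right k P.length)]
    exact h.2 _
  · rintro ⟨⟨hsteps, hsums⟩, hs, hlast⟩
    refine ⟨fun x hx => ?_, fun k => ?_⟩
    · rcases List.mem_append.1 hx with hx | hx
      · exact hsteps x hx
      · exact List.mem_singleton.1 hx ▸ hs
    · rcases le_or_gt k P.length with hk | hk
      · rw [List.take_append_of_le_length hk]
        exact hsums k
      · rw [List.take_of_length_le (by simpa using hk)]
        simpa using hlast

theorem IsBallot.pathHeight_le_length {P : List ℤ} (hP : IsBallot P) :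
    pathHeight P ≤ P.length := by
  induction P using List.reverseRecOn with
  | nil => rfl
  | append_singleton P s ih =>
    obtain ⟨hP, hs, -⟩ := isBallot_append_singleton.1 hP
    have := ih hP
    have := sum_le_pathHeight P
    simp only [pathHeight_append_singleton, List.length_append, List.length_singleton]
    push_cast
    omega

end Height

section Series

variable {α β : Type*}

/-- The ordinary generating function of `s`, counting its elements by `size`. The coefficient at a
size that infinitely many elements of `s` share is the junk value `0`. -/
noncomputable def sizeSeries (size : α → ℕ) (s : Set α) : ℚ⟦X⟧ :=
  .mk fun n => ((s ∩ size ⁻¹' {n}).ncard : ℚ)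

theorem coeff_sizeSeries (size : α → ℕ) (s : Set α) (n : ℕ) :
    coeff n (sizeSeries size s) = ((s ∩ size ⁻¹' {n}).ncard : ℚ) :=
  coeff_mk ..

theorem sizeSeries_empty (size : α → ℕ) : sizeSeries size ∅ = 0 := by
  ext n
  simp [coeff_sizeSeries]

theorem sizeSeries_singleton {size : α → ℕ} {a : α} (ha : size a = 0) :
    sizeSeries size {a} = 1 := by
  ext n
  rw [coeff_sizeSeries, coeff_one]
  split_ifs with hn
  · simp [Set.inter_eq_left.2 (show {a} ⊆ size ⁻¹' {n} by simp [ha, hn])]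
  · simp [Set.singleton_inter_eq_empty.2 (show a ∉ size ⁻¹' {n} by simp [ha, Ne.symm hn])]

theorem sizeSeries_image {size : α → ℕ} {size' : β → ℕ} {f : α → β} (hf : f.Injective)
    (hsize : ∀ a, size' (f a) = size a + 1) (s : Set α) :
    sizeSeries size' (f '' s) = X * sizeSeries size s := by
  ext n
  rw [coeff_sizeSeries, ← Set.image_inter_preimage, Set.ncard_image_of_injective _ hf]
  cases n with
  | zero =>
    have : f ⁻¹' (size' ⁻¹' {0}) = ∅ := by
      ext a
      simp [hsize]
    simp [this]
  | succ n =>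
    have : f ⁻¹' (size' ⁻¹' {n + 1}) = size ⁻¹' {n} := by
      ext a
      simp [hsize]
    rw [coeff_succ_X_mul, coeff_sizeSeries, this]

theorem sizeSeries_union {size : α → ℕ} {s t : Set α} (hst : Disjoint s t)
    (hfin : ∀ n, ((s ∪ t) ∩ size ⁻¹' {n}).Finite) :
    sizeSeries size (s ∪ t) = sizeSeries size s + sizeSeries size t := by
  ext n
  have hfin := hfin n
  rw [Set.union_inter_distrib_right] at hfin
  rw [map_add, coeff_sizeSeries, coeff_sizeSeries, coeff_sizeSeries,
    Set.union_inter_distrib_right, Set.ncard_union_eq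
      (hst.mono Set.inter_subset_left Set.inter_subset_left)
      (hfin.subset Set.subset_union_left) (hfin.subset Set.subset_union_right), Nat.cast_add]

theorem prod_inter_preimage_add (size : α → ℕ) (size' : β → ℕ) (s : Set α) (t : Set β) (n : ℕ) :
    s ×ˢ t ∩ (fun p => size p.1 + size' p.2) ⁻¹' {n} =
      ⋃ ij ∈ (antidiagonal n : Set (ℕ × ℕ)),
        (s ∩ size ⁻¹' {ij.1}) ×ˢ (t ∩ size' ⁻¹' {ij.2}) := by
  ext ⟨a, b⟩
  simp [and_comm, and_left_comm]

theorem finite_prod_inter_preimage_add {size : α → ℕ} {size' : β → ℕ} {s : Set α} {t : Set β}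
    (hs : ∀ n, (s ∩ size ⁻¹' {n}).Finite) (ht : ∀ n, (t ∩ size' ⁻¹' {n}).Finite) (n : ℕ) :
    (s ×ˢ t ∩ (fun p => size p.1 + size' p.2) ⁻¹' {n}).Finite := by
  rw [prod_inter_preimage_add]
  exact (finite_toSet _).biUnion fun ij _ => (hs ij.1).prod (ht ij.2)

theorem sizeSeries_prod {size : α → ℕ} {size' : β → ℕ} {s : Set α} {t : Set β}
    (hs : ∀ n, (s ∩ size ⁻¹' {n}).Finite) (ht : ∀ n, (t ∩ size' ⁻¹' {n}).Finite) :
    sizeSeries (fun p : α × β => size p.1 + size' p.2) (s ×ˢ t) =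
      sizeSeries size s * sizeSeries size' t := by
  ext n
  have disjoint_blocks : (antidiagonal n : Set (ℕ × ℕ)).PairwiseDisjoint
      fun ij => (s ∩ size ⁻¹' {ij.1}) ×ˢ (t ∩ size' ⁻¹' {ij.2}) :=
    fun ij _ ij' _ hne => Set.disjoint_left.2 fun p hp hp' =>
      hne (Prod.ext (hp.1.2.symm.trans hp'.1.2) (hp.2.2.symm.trans hp'.2.2))
  rw [coeff_sizeSeries, prod_inter_preimage_add, (finite_toSet _).ncard_biUnion
    (fun ij _ => (hs ij.1).prod (ht ij.2)) disjoint_blocks, finsum_mem_coe_finset, coeff_mul]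
  push_cast [Set.ncard_prod, coeff_sizeSeries]
  rfl

end Series

section BallotSeries

/-- Ballot paths of height at most `h` ending at level `j`. -/
def boundedPaths (h j : ℕ) : Set (List ℤ) :=
  {P | IsBallot P ∧ pathHeight P ≤ h ∧ P.sum = j}

/-- Ballot paths of height exactly `h` ending at level `j`. -/
def pathsOfHeight (h j : ℕ) : Set (List ℤ) :=
  {P | IsBallot P ∧ pathHeight P = h ∧ P.sum = j}

theorem finite_isBallot_inter_length (n : ℕ) :
    ({P | IsBallot P} ∩ List.length ⁻¹' {n}).Finite := by
  refine ((List.finite_length_eq ({1, -1} : Set ℤ) n).image (List.map (↑))).subset ?_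
  rintro P ⟨hP, hn⟩
  have hsteps : P ∈ Set.range (List.map ((↑) : ({1, -1} : Set ℤ) → ℤ)) := by
    rw [Set.range_list_map_coe]
    exact hP.1
  obtain ⟨Q, rfl⟩ := hsteps
  exact ⟨Q, by simpa using hn, rfl⟩

theorem finite_boundedPaths_inter_length (h j n : ℕ) :
    (boundedPaths h j ∩ List.length ⁻¹' {n}).Finite :=
  (finite_isBallot_inter_length n).subset (Set.inter_subset_inter_left _ fun _ hP => hP.1)

theorem finite_pathsOfHeight_inter_length (h j n : ℕ) :
    (pathsOfHeight h j ∩ List.length ⁻¹' {n}).Finite :=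
  (finite_isBallot_inter_length n).subset (Set.inter_subset_inter_left _ fun _ hP => hP.1)

theorem nil_mem_boundedPaths (h : ℕ) {j : ℕ} : [] ∈ boundedPaths h j ↔ j = 0 := by
  simp [boundedPaths, isBallot_nil, pathHeight_nil, eq_comm]

theorem append_singleton_mem_boundedPaths {h j : ℕ} {P : List ℤ} {s : ℤ} :
    P ++ [s] ∈ boundedPaths h j ↔
      j ≤ h ∧ (s = 1 ∧ (∃ i, j = i + 1 ∧ P ∈ boundedPaths h i) ∨
        s = -1 ∧ P ∈ boundedPaths h (j + 1)) := by
  simp only [boundedPaths, Set.mem_ofPred_eq, isBallot_append_singleton,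
    pathHeight_append_singleton, List.sum_append, List.sum_singleton, max_le_iff]
  constructor
  · rintro ⟨⟨hP, hs, hlast⟩, ⟨hh, hj⟩, hsum⟩
    have hnonneg := hP.sum_nonneg
    refine ⟨by omega, hs.imp ?_ ?_⟩ <;> rintro rfl
    · exact ⟨rfl, j - 1, by omega, hP, hh, by omega⟩
    · exact ⟨rfl, hP, hh, by push_cast; omega⟩
  · rintro ⟨hjh, ⟨rfl, i, rfl, hP, hh, hsum⟩ | ⟨rfl, hP, hh, hsum⟩⟩ <;>
      push_cast at * <;> exact ⟨⟨hP, by simp, by omega⟩, ⟨hh, by omega⟩, by omega⟩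

theorem boundedPaths_zero (h : ℕ) :
    boundedPaths h 0 = {[]} ∪ (· ++ [-1]) '' boundedPaths h 1 := by
  ext P
  induction P using List.reverseRecOn with
  | nil => simp [nil_mem_boundedPaths]
  | append_singleton P s _ =>
    simp [append_singleton_mem_boundedPaths, and_comm, @eq_comm _ s]

theorem boundedPaths_succ {h j : ℕ} (hj : j + 1 ≤ h) :
    boundedPaths h (j + 1) =
      (· ++ [1]) '' boundedPaths h j ∪ (· ++ [-1]) '' boundedPaths h (j + 2) := by
  ext P
  induction P using List.reverseRecOn with
  | nil => simp [nil_mem_boundedPaths]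
  | append_singleton P s _ =>
    simp [append_singleton_mem_boundedPaths, hj, and_comm, @eq_comm _ s]

theorem boundedPaths_eq_empty {h j : ℕ} (hj : h < j) : boundedPaths h j = ∅ := by
  refine Set.eq_empty_of_forall_notMem fun P hP => ?_
  have := sum_le_pathHeight P
  have := hP.2
  omega

theorem boundedPaths_add_one (h j : ℕ) :
    boundedPaths (h + 1) j = boundedPaths h j ∪ pathsOfHeight (h + 1) j := by
  ext P
  simp only [boundedPaths, pathsOfHeight, Set.mem_ofPred_eq, Set.mem_union]
  push_cast
  rw [← and_or_left, ← or_and_right, Int.le_add_one_iff]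

theorem boundedPaths_disjoint_pathsOfHeight (h j : ℕ) :
    Disjoint (boundedPaths h j) (pathsOfHeight (h + 1) j) :=
  Set.disjoint_left.2 fun P hle heq => by
    have := hle.2.1
    have := heq.2.1
    omega

/-- The length generating function of the ballot paths of height at most `h` ending at level
`j`. -/
noncomputable def boundedSeries (h j : ℕ) : ℚ⟦X⟧ :=
  sizeSeries List.length (boundedPaths h j)

/-- The length generating function of the ballot paths of height exactly `h` ending at level
`j`. -/
noncomputable def heightSeries (h j : ℕ) : ℚ⟦X⟧ :=
  sizeSeries List.length (pathsOfHeight h j)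

theorem boundedSeries_add_one (h j : ℕ) :
    boundedSeries (h + 1) j = boundedSeries h j + heightSeries (h + 1) j := by
  have hfin := finite_boundedPaths_inter_length (h + 1) j
  rw [boundedPaths_add_one] at hfin
  rw [boundedSeries, boundedPaths_add_one,
    sizeSeries_union (boundedPaths_disjoint_pathsOfHeight h j) hfin]
  rfl

theorem boundedSeries_eq_zero {h j : ℕ} (hj : h < j) : boundedSeries h j = 0 := by
  rw [boundedSeries, boundedPaths_eq_empty hj, sizeSeries_empty]

theorem sizeSeries_image_append_singleton (s : ℤ) (S : Set (List ℤ)) :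
    sizeSeries List.length ((· ++ [s]) '' S) = X * sizeSeries List.length S :=
  sizeSeries_image (List.append_left_injective [s]) (by simp) S

theorem boundedSeries_zero (h : ℕ) : boundedSeries h 0 = 1 + X * boundedSeries h 1 := by
  have hfin := finite_boundedPaths_inter_length h 0
  rw [boundedPaths_zero] at hfin
  rw [boundedSeries, boundedPaths_zero, sizeSeries_union (by simp) hfin,
    sizeSeries_singleton List.length_nil, sizeSeries_image_append_singleton]
  rfl

theorem boundedSeries_succ {h j : ℕ} (hj : j + 1 ≤ h) :
    boundedSeries h (j + 1) = X * (boundedSeries h j + boundedSeries h (j + 2)) := by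
  have hfin := finite_boundedPaths_inter_length h (j + 1)
  rw [boundedPaths_succ hj] at hfin
  have last_steps_differ : Disjoint ((· ++ [1]) '' boundedPaths h j)
      ((· ++ [-1]) '' boundedPaths h (j + 2)) := by
    rw [Set.disjoint_left]
    rintro _ ⟨P, -, rfl⟩ ⟨Q, -, hQ⟩
    simpa using congrArg List.getLast? hQ
  rw [boundedSeries, boundedPaths_succ hj, sizeSeries_union last_steps_differ hfin,
    sizeSeries_image_append_singleton, sizeSeries_image_append_singleton, mul_add]
  rfl

end BallotSeries

section Coefficients

theorem A_eq_coeff (j n : ℕ) : (A j n : ℚ) = coeff (2 * n) (boundedSeries j 0) := by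
  rw [boundedSeries, coeff_sizeSeries, A, ← Nat.card_coe_set_eq]
  congr 1
  refine Nat.card_congr (Equiv.subtypeEquivRight fun P => ?_)
  simp only [IsDyck, boundedPaths, Set.mem_ofPred_eq, Set.mem_inter_iff, Set.mem_preimage,
    Set.mem_singleton_iff, Nat.cast_zero]
  tauto

/-- The triples of paths counted by `N3`, but of any total length, whose heights are `k + 6`,
`k + 4` and `k + 2`. -/
def triplePaths (k : ℕ) : Set (List ℤ × List ℤ × List ℤ) :=
  pathsOfHeight (k + 6) 4 ×ˢ pathsOfHeight (k + 4) 3 ×ˢ pathsOfHeight (k + 2) 2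

/-- The total number of steps of a triple of paths. -/
def tripleLength (T : List ℤ × List ℤ × List ℤ) : ℕ :=
  T.1.length + (T.2.1.length + T.2.2.length)

theorem finite_triplePaths_inter_tripleLength (k n : ℕ) :
    (triplePaths k ∩ tripleLength ⁻¹' {n}).Finite :=
  finite_prod_inter_preimage_add (finite_pathsOfHeight_inter_length _ _)
    (finite_prod_inter_preimage_add (finite_pathsOfHeight_inter_length _ _)
      (finite_pathsOfHeight_inter_length _ _)) n

/-- The length generating function of `triplePaths k`, multiplied by `X` so that the length
`2 * n - 1` is read off in degree `2 * n`. -/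
noncomputable def tripleSeries (k : ℕ) : ℚ⟦X⟧ :=
  X * sizeSeries tripleLength (triplePaths k)

theorem tripleSeries_eq (k : ℕ) :
    tripleSeries k =
      X * (heightSeries (k + 6) 4 * (heightSeries (k + 4) 3 * heightSeries (k + 2) 2)) := by
  have hQR := sizeSeries_prod (finite_pathsOfHeight_inter_length (k + 4) 3)
    (finite_pathsOfHeight_inter_length (k + 2) 2)
  have hPQR := sizeSeries_prod (finite_pathsOfHeight_inter_length (k + 6) 4)
    (finite_prod_inter_preimage_add (finite_pathsOfHeight_inter_length (k + 4) 3)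
      (finite_pathsOfHeight_inter_length (k + 2) 2))
  rw [hQR] at hPQR
  exact congrArg (X * ·) hPQR

theorem pairwise_disjoint_triplePaths :
    Pairwise fun k k' => Disjoint (triplePaths k) (triplePaths k') :=
  fun k k' hne => Set.disjoint_left.2 fun T hT hT' => hne <| by
    have := hT.1.2.1
    have := hT'.1.2.1
    omega

theorem N3_eq_ncard_biUnion (n : ℕ) :
    N3 n = (⋃ k ∈ (range n : Set ℕ), triplePaths k ∩ tripleLength ⁻¹' {2 * n - 1}).ncard := by
  rw [N3, ← Nat.card_coe_set_eq]
  refine Nat.card_congr (Equiv.subtypeEquivRight fun ⟨P, Q, R⟩ => ?_)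
  simp only [triplePaths, tripleLength, pathsOfHeight, Set.mem_ofPred_eq, Set.mem_iUnion,
    Set.mem_inter_iff, Set.mem_prod, Set.mem_preimage, Set.mem_singleton_iff, coe_range,
    Set.mem_Iio, exists_prop]
  constructor
  · rintro ⟨hP, hQ, hR, hlen, hP4, hQ3, hR2, hQP, hRP⟩
    have := hP.pathHeight_le_length
    have := hQ.pathHeight_le_length
    have := hR.pathHeight_le_length
    have := sum_le_pathHeight R
    obtain ⟨k, hk⟩ := Int.eq_ofNat_of_zero_le (show 0 ≤ pathHeight P - 6 by omega)
    exact ⟨k, by omega, ⟨⟨hP, by push_cast; omega, hP4⟩, ⟨hQ, by push_cast; omega, hQ3⟩,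
      hR, by push_cast; omega, hR2⟩, by omega⟩
  · rintro ⟨k, -, ⟨⟨hP, hhP, hP4⟩, ⟨hQ, hhQ, hQ3⟩, hR, hhR, hR2⟩, hlen⟩
    push_cast at *
    exact ⟨hP, hQ, hR, by omega, hP4, hQ3, hR2, by omega, by omega⟩

theorem N3_eq_coeff (n : ℕ) :
    (N3 n : ℚ) = coeff (2 * n) (∑ k ∈ range n, tripleSeries k) := by
  have disjoint_blocks : (range n : Set ℕ).PairwiseDisjoint
      fun k => triplePaths k ∩ tripleLength ⁻¹' {2 * n - 1} :=
    fun k _ k' _ hne => (pairwise_disjoint_triplePaths hne).mono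
      Set.inter_subset_left Set.inter_subset_left
  rw [N3_eq_ncard_biUnion, (finite_toSet _).ncard_biUnion
    (fun k _ => finite_triplePaths_inter_tripleLength k _) disjoint_blocks,
    finsum_mem_coe_finset, map_sum, Nat.cast_sum]
  refine sum_congr rfl fun k hk => ?_
  have hn := mem_range.1 hk
  rw [tripleSeries, show 2 * n = 2 * n - 1 + 1 by omega, coeff_succ_X_mul, coeff_sizeSeries]
  rfl

end Coefficients

section Strip

variable {R : Type*} [CommRing R]

/-- The first-step recurrence for the generating functions `W j`, in the variable `x`, of the
`±1`-walks from `0` to `j` that stay between `0` and `h`. -/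
structure IsStripRecurrence (x : R) (h : ℕ) (W : ℕ → R) : Prop where
  zero : W 0 = 1 + x * W 1
  succ : ∀ j < h, W (j + 1) = x * (W j + W (j + 2))
  top : W (h + 1) = 0

namespace IsStripRecurrence

variable {x z : R} {h : ℕ} {W : ℕ → R}

theorem mul_succ_eq (hW : IsStripRecurrence x h W) (hz : z = x * (1 + z ^ 2)) {j m : ℕ}
    (hjm : j + m = h) :
    (1 - (z ^ 2) ^ (m + 1)) * W (j + 1) = z * (1 - (z ^ 2) ^ m) * W j := by
  induction m generalizing j with
  | zero =>
    obtain rfl : j = h := hjm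
    simp [hW.top]
  | succ m ih =>
    linear_combination z * ih (j := j + 1) (by omega) +
      (1 - (z ^ 2) ^ (m + 1)) * ((1 + z ^ 2) * hW.succ j (by omega) - (W j + W (j + 2)) * hz)

theorem mul_zero_eq (hW : IsStripRecurrence x h W) (hz : z = x * (1 + z ^ 2)) :
    (1 - (z ^ 2) ^ (h + 2)) * W 0 = (1 + z ^ 2) * (1 - (z ^ 2) ^ (h + 1)) := by
  linear_combination z * hW.mul_succ_eq hz (zero_add h) +
    (1 - (z ^ 2) ^ (h + 1)) * ((1 + z ^ 2) * hW.zero - W 1 * hz)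

theorem mul_eq [IsDomain R] (hW : IsStripRecurrence x h W) (hz : z = x * (1 + z ^ 2))
    (hz_ne : ∀ m, 1 - (z ^ 2) ^ (m + 1) ≠ 0) {j m : ℕ} (hjm : j + m = h + 1) :
    (1 - (z ^ 2) ^ (h + 2)) * W j = z ^ j * (1 + z ^ 2) * (1 - (z ^ 2) ^ m) := by
  induction j generalizing m with
  | zero =>
    obtain rfl : m = h + 1 := by omega
    rw [hW.mul_zero_eq hz, pow_zero, one_mul]
  | succ j ih =>
    apply mul_left_cancel₀ (hz_ne m)
    linear_combination (1 - (z ^ 2) ^ (h + 2)) * hW.mul_succ_eq hz (j := j) (m := m) (by omega) +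
      z * (1 - (z ^ 2) ^ m) * ih (m := m + 1) (by omega)

end IsStripRecurrence

end Strip

section Telescoping

variable {R : Type*} [CommRing R]

/-- The `q`-Pochhammer symbol `(y; q)_n`. -/
def qPoch (q y : R) (n : ℕ) : R :=
  ∏ i ∈ range n, (1 - q ^ i * y)

theorem qPoch_succ (q y : R) (n : ℕ) : qPoch q y (n + 1) = qPoch q y n * (1 - q ^ n * y) :=
  prod_range_succ ..

theorem qPoch_succ' (q y : R) (n : ℕ) :
    qPoch q y (n + 1) = qPoch q (q * y) n * (1 - y) := by
  simp only [qPoch, prod_range_succ', pow_succ, mul_assoc, pow_zero, one_mul]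

/-- The part of degree at most `2` in `y` of `(y; q)_5`, as given by the `q`-binomial theorem. -/
def qPochTrunc (q y : R) : R :=
  1 - (1 + q + q ^ 2 + q ^ 3 + q ^ 4) * y +
    q * (1 + q ^ 2) * (1 + q + q ^ 2 + q ^ 3 + q ^ 4) * y ^ 2

theorem pow_three_dvd_qPochTrunc_sub (q y : R) : y ^ 3 ∣ qPochTrunc q y - qPoch q y 5 :=
  ⟨q ^ 3 * (1 + q ^ 2) * (1 + q + q ^ 2 + q ^ 3 + q ^ 4) -
      q ^ 6 * (1 + q + q ^ 2 + q ^ 3 + q ^ 4) * y + q ^ 10 * y ^ 2, by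
    simp only [qPochTrunc, qPoch, prod_range_succ, prod_range_zero]
    ring⟩

theorem qPochTrunc_telescope (q y : R) :
    (1 - q ^ 5 * y) * qPochTrunc q y - (1 - y) * qPochTrunc q (q * y) =
      q ^ 3 * (1 - q ^ 3) * (1 + q ^ 2) * (1 + q + q ^ 2 + q ^ 3 + q ^ 4) * y ^ 3 := by
  simp only [qPochTrunc]
  ring

theorem sub_sum_mul_qPoch [IsDomain R] {q y a s : R} {t : ℕ → R}
    (hy : ∀ k, 1 - q ^ k * y ≠ 0)
    (hs : s * qPoch q y 5 = a * (qPochTrunc q y - qPoch q y 5))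
    (ht : ∀ k, t k * qPoch q (q ^ k * y) 6 = a * (q ^ 3 * (1 - q ^ 3) * (1 + q ^ 2) *
      (1 + q + q ^ 2 + q ^ 3 + q ^ 4) * (q ^ k * y) ^ 3)) (K : ℕ) :
    (s - ∑ k ∈ range K, t k) * qPoch q (q ^ K * y) 5 =
      a * (qPochTrunc q (q ^ K * y) - qPoch q (q ^ K * y) 5) := by
  induction K with
  | zero => simpa using hs
  | succ K ih =>
    have hlast := qPoch_succ q (q ^ K * y) 5
    have hfirst := qPoch_succ' q (q ^ K * y) 5
    rw [sum_range_succ, pow_succ', mul_assoc q]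
    apply mul_right_cancel₀ (hy K)
    linear_combination (1 - q ^ 5 * (q ^ K * y)) * ih - ht K +
      a * qPochTrunc_telescope q (q ^ K * y) +
      (s - ∑ k ∈ range K, t k + a) * (hlast - hfirst) + t K * hfirst

theorem pow_dvd_sub_sum [IsDomain R] {q y a s : R} {t : ℕ → R}
    (hy : ∀ k, IsUnit (1 - q ^ k * y))
    (hs : s * qPoch q y 5 = a * (qPochTrunc q y - qPoch q y 5))
    (ht : ∀ k, t k * qPoch q (q ^ k * y) 6 = a * (q ^ 3 * (1 - q ^ 3) * (1 + q ^ 2) *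
      (1 + q + q ^ 2 + q ^ 3 + q ^ 4) * (q ^ k * y) ^ 3)) (K : ℕ) :
    (q ^ K * y) ^ 3 ∣ s - ∑ k ∈ range K, t k := by
  have hunit : IsUnit (qPoch q (q ^ K * y) 5) := by
    refine IsUnit.prod_iff.2 fun i _ => ?_
    rw [← mul_assoc, ← pow_add]
    exact hy (i + K)
  rw [← hunit.dvd_mul_right, sub_sum_mul_qPoch (fun k => (hy k).ne_zero) hs ht]
  exact (pow_three_dvd_qPochTrunc_sub q _).mul_left a

theorem base_remainder_mul_qPoch {q W₁ W₂ W₃ W₅ : R}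
    (h₁ : (1 - q ^ 3) * W₁ = (1 + q) * (1 - q ^ 2))
    (h₂ : (1 - q ^ 4) * W₂ = (1 + q) * (1 - q ^ 3))
    (h₃ : (1 - q ^ 5) * W₃ = (1 + q) * (1 - q ^ 4))
    (h₅ : (1 - q ^ 7) * W₅ = (1 + q) * (1 - q ^ 6)) :
    q ^ 4 * ((1 + q) ^ 2 * (q ^ 2 - 4 * q + 5) + 1 - 2 * W₁ - 2 * W₂ - W₃ - W₅) *
        qPoch q (q ^ 3) 5 =
      (1 - q) ^ 5 * (1 + q) ^ 3 * (qPochTrunc q (q ^ 3) - qPoch q (q ^ 3) 5) := by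
  simp only [qPoch, qPochTrunc, prod_range_succ, prod_range_zero]
  linear_combination
    -2 * q ^ 4 * (1 - q ^ 4) * (1 - q ^ 5) * (1 - q ^ 6) * (1 - q ^ 7) * h₁ -
    2 * q ^ 4 * (1 - q ^ 3) * (1 - q ^ 5) * (1 - q ^ 6) * (1 - q ^ 7) * h₂ -
    q ^ 4 * (1 - q ^ 3) * (1 - q ^ 4) * (1 - q ^ 6) * (1 - q ^ 7) * h₃ -
    q ^ 4 * (1 - q ^ 3) * (1 - q ^ 4) * (1 - q ^ 5) * (1 - q ^ 6) * h₅

end Telescoping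

section SuperCatalan

theorem superCatalan_succ_left (m n : ℕ) :
    superCatalan (m + 1) n = 4 * superCatalan m n - superCatalan m (n + 1) := by
  simp only [superCatalan, mul_add, mul_one, Nat.factorial_succ, ← add_assoc, add_right_comm m 1 n]
  push_cast
  field_simp
  ring

theorem superCatalan_one_left (n : ℕ) : superCatalan 1 n = catalan n := by
  have hcatalan : ((n : ℚ) + 1) * catalan n =
      (2 * n).factorial / (n.factorial * n.factorial) := by
    rw [← Nat.cast_add_one, ← Nat.cast_mul, succ_mul_catalan_eq_centralBinom,
      Nat.centralBinom_eq_two_mul_choose, Nat.cast_choose ℚ (by omega), two_mul,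
      Nat.add_sub_cancel]
  apply mul_left_cancel₀ (n.cast_add_one_ne_zero (R := ℚ))
  rw [hcatalan, superCatalan, add_comm 1 n, Nat.factorial_succ n]
  push_cast
  field_simp
  norm_num

theorem superCatalan_three_left (n : ℕ) :
    superCatalan 3 n = 16 * catalan n - 8 * catalan (n + 1) + catalan (n + 2) := by
  simp only [superCatalan_succ_left 2, superCatalan_succ_left 1, superCatalan_one_left]
  ring

end SuperCatalan

section CatalanSubstitution

/-- The series `z = X C(X²)`, with `C` the Catalan series, which solves `z = X (1 + z²)`. -/
noncomputable def stripRoot : ℚ⟦X⟧ :=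
  X * expand 2 two_ne_zero (map (Nat.castRingHom ℚ) catalanSeries)

theorem map_catalanSeries_eq :
    map (Nat.castRingHom ℚ) catalanSeries =
      1 + X * map (Nat.castRingHom ℚ) catalanSeries ^ 2 := by
  conv_lhs => rw [← catalanSeries_sq_mul_X_add_one]
  simp only [map_add, map_mul, map_pow, map_one, map_X]
  ring

theorem expand_catalanSeries_eq :
    expand 2 two_ne_zero (map (Nat.castRingHom ℚ) catalanSeries) = 1 + stripRoot ^ 2 := by
  conv_lhs => rw [map_catalanSeries_eq]
  simp only [map_add, map_mul, map_pow, map_one, expand_X, stripRoot]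
  ring

theorem stripRoot_eq : stripRoot = X * (1 + stripRoot ^ 2) := by
  rw [← expand_catalanSeries_eq, stripRoot]

theorem X_dvd_stripRoot : X ∣ stripRoot := Dvd.intro _ rfl

theorem stripRoot_ne_zero : stripRoot ≠ 0 := by
  intro h
  exact X_ne_zero (R := ℚ) (by simpa [h] using stripRoot_eq.symm)

theorem isUnit_one_sub_stripRoot_sq_pow (m : ℕ) : IsUnit (1 - (stripRoot ^ 2) ^ (m + 1)) := by
  simp [isUnit_iff_constantCoeff, X_dvd_iff.1 X_dvd_stripRoot]

theorem coeff_catalanSeries_polynomial (n : ℕ) :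
    coeff n (map (Nat.castRingHom ℚ) catalanSeries ^ 4 -
      6 * map (Nat.castRingHom ℚ) catalanSeries ^ 3 +
      10 * map (Nat.castRingHom ℚ) catalanSeries ^ 2) = superCatalan 3 (n + 1) := by
  set c := map (Nat.castRingHom ℚ) catalanSeries
  have hc : c = 1 + X * c ^ 2 := map_catalanSeries_eq
  have coeff_c (m : ℕ) : coeff m c = catalan m := by simp [c]
  have linearized : (c ^ 4 - 6 * c ^ 3 + 10 * c ^ 2) * X ^ 3 =
      c - C 8 * (c * X) + C 16 * (c * X ^ 2) - (1 - C 7 * X + C 10 * X ^ 2) := by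
    simp only [map_ofNat]
    linear_combination
      (-(X ^ 2 * c ^ 2 + X * c + 1 - X) + 6 * X * (X * c + 1) - 10 * X ^ 2) * hc
  have low_degree : coeff (n + 3) (1 - C 7 * X + C 10 * X ^ 2 : ℚ⟦X⟧) = 0 := by
    simp [coeff_one, coeff_X_pow]
  rw [← coeff_mul_X_pow _ 3, linearized, map_sub, low_degree, map_add, map_sub, coeff_C_mul,
    coeff_C_mul, coeff_succ_mul_X, coeff_mul_X_pow c 2 (n + 1), coeff_c, coeff_c, coeff_c,
    superCatalan_three_left]
  ring

theorem coeff_stripRoot_polynomial (n : ℕ) :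
    coeff (2 * n) ((1 + stripRoot ^ 2) ^ 2 *
      ((stripRoot ^ 2) ^ 2 - 4 * stripRoot ^ 2 + 5)) = superCatalan 3 (n + 1) := by
  have expanded : (1 + stripRoot ^ 2) ^ 2 * ((stripRoot ^ 2) ^ 2 - 4 * stripRoot ^ 2 + 5) =
      expand 2 two_ne_zero (map (Nat.castRingHom ℚ) catalanSeries ^ 4 -
        6 * map (Nat.castRingHom ℚ) catalanSeries ^ 3 +
        10 * map (Nat.castRingHom ℚ) catalanSeries ^ 2) := by
    simp only [map_add, map_sub, map_mul, map_pow, map_ofNat, expand_catalanSeries_eq]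
    ring
  rw [expanded, coeff_expand_mul, coeff_catalanSeries_polynomial]

end CatalanSubstitution

section ClosedForms

theorem isStripRecurrence_boundedSeries (h : ℕ) :
    IsStripRecurrence X h (boundedSeries h) where
  zero := boundedSeries_zero h
  succ _ hj := boundedSeries_succ hj
  top := boundedSeries_eq_zero h.lt_succ_self

theorem mul_boundedSeries {h j m : ℕ} (hjm : j + m = h + 1) :
    (1 - (stripRoot ^ 2) ^ (h + 2)) * boundedSeries h j =
      stripRoot ^ j * (1 + stripRoot ^ 2) * (1 - (stripRoot ^ 2) ^ m) :=
  (isStripRecurrence_boundedSeries h).mul_eq stripRoot_eq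
    (fun m => (isUnit_one_sub_stripRoot_sq_pow m).ne_zero) hjm

theorem mul_boundedSeries_zero (h : ℕ) :
    (1 - (stripRoot ^ 2) ^ (h + 2)) * boundedSeries h 0 =
      (1 + stripRoot ^ 2) * (1 - (stripRoot ^ 2) ^ (h + 1)) :=
  (isStripRecurrence_boundedSeries h).mul_zero_eq stripRoot_eq

theorem mul_heightSeries {h j m : ℕ} (hjm : j + m = h + 1) :
    (1 - (stripRoot ^ 2) ^ (h + 2)) * (1 - (stripRoot ^ 2) ^ (h + 3)) * heightSeries (h + 1) j =
      stripRoot ^ j * (1 + stripRoot ^ 2) * (1 - stripRoot ^ 2) *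
        (1 - (stripRoot ^ 2) ^ (j + 1)) * (stripRoot ^ 2) ^ m := by
  have lower := mul_boundedSeries hjm
  have upper := mul_boundedSeries (h := h + 1) (j := j) (m := m + 1) (by omega)
  have hpow : (stripRoot ^ 2) ^ (h + 2) = (stripRoot ^ 2) ^ m * (stripRoot ^ 2) ^ (j + 1) := by
    rw [← pow_add]
    congr 1
    omega
  rw [boundedSeries_add_one] at upper
  linear_combination (1 - (stripRoot ^ 2) ^ (h + 2)) * upper -
    (1 - (stripRoot ^ 2) ^ (h + 3)) * lower -
    stripRoot ^ j * (1 + stripRoot ^ 2) * (1 - stripRoot ^ 2) * hpow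

theorem tripleSeries_mul_qPoch (k : ℕ) :
    tripleSeries k * qPoch (stripRoot ^ 2) ((stripRoot ^ 2) ^ (k + 3)) 6 =
      (1 + stripRoot ^ 2) ^ 2 * (1 - stripRoot ^ 2) ^ 3 * (1 - (stripRoot ^ 2) ^ 3) *
        (1 - (stripRoot ^ 2) ^ 4) * (1 - (stripRoot ^ 2) ^ 5) *
        (stripRoot ^ 2) ^ (3 * k + 8) := by
  have hP := mul_heightSeries (h := k + 5) (j := 4) (m := k + 2) (by omega)
  have hQ := mul_heightSeries (h := k + 3) (j := 3) (m := k + 1) (by omega)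
  have hR := mul_heightSeries (h := k + 1) (j := 2) (m := k) (by omega)
  set q := stripRoot ^ 2
  calc
    tripleSeries k * qPoch q (q ^ (k + 3)) 6 =
        X * (((1 - q ^ (k + 5 + 2)) * (1 - q ^ (k + 5 + 3)) * heightSeries (k + 6) 4) *
          (((1 - q ^ (k + 3 + 2)) * (1 - q ^ (k + 3 + 3)) * heightSeries (k + 4) 3) *
            ((1 - q ^ (k + 1 + 2)) * (1 - q ^ (k + 1 + 3)) * heightSeries (k + 2) 2))) := by
      simp only [tripleSeries_eq, qPoch, prod_range_succ, prod_range_zero]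
      ring
    _ = X * (1 + q) * ((1 + q) ^ 2 * (1 - q) ^ 3 * (1 - q ^ 3) * (1 - q ^ 4) * (1 - q ^ 5) *
          q ^ (3 * k + 3)) * stripRoot ^ 9 := by
      rw [hP, hQ, hR]
      ring
    _ = (1 + q) ^ 2 * (1 - q) ^ 3 * (1 - q ^ 3) * (1 - q ^ 4) * (1 - q ^ 5) *
          q ^ (3 * k + 8) := by
      rw [← stripRoot_eq]
      ring

theorem X_pow_dvd_sub_sum_tripleSeries (K : ℕ) :
    X ^ (6 * K + 10) ∣
      (1 + stripRoot ^ 2) ^ 2 * ((stripRoot ^ 2) ^ 2 - 4 * stripRoot ^ 2 + 5) + 1 -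
        2 * boundedSeries 1 0 - 2 * boundedSeries 2 0 - boundedSeries 3 0 - boundedSeries 5 0 -
        ∑ k ∈ range K, tripleSeries k := by
  set q := stripRoot ^ 2 with hq
  have base := base_remainder_mul_qPoch (mul_boundedSeries_zero 1) (mul_boundedSeries_zero 2)
    (mul_boundedSeries_zero 3) (mul_boundedSeries_zero 5)
  have step (k : ℕ) : q ^ 4 * tripleSeries k * qPoch q (q ^ k * q ^ 3) 6 =
      (1 - q) ^ 5 * (1 + q) ^ 3 * (q ^ 3 * (1 - q ^ 3) * (1 + q ^ 2) *
        (1 + q + q ^ 2 + q ^ 3 + q ^ 4) * (q ^ k * q ^ 3) ^ 3) := by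
    rw [← pow_add, mul_assoc, tripleSeries_mul_qPoch]
    ring
  have hunit (k : ℕ) : IsUnit (1 - q ^ k * q ^ 3) := by
    rw [← pow_add]
    exact isUnit_one_sub_stripRoot_sq_pow (k + 2)
  have hdvd := pow_dvd_sub_sum hunit base step K
  rw [← mul_sum, ← mul_sub] at hdvd
  have hpow : (q ^ K * q ^ 3) ^ 3 = q ^ 4 * stripRoot ^ (6 * K + 10) := by
    rw [hq]
    ring
  rw [hpow, mul_dvd_mul_iff_left (pow_ne_zero 4 (pow_ne_zero 2 stripRoot_ne_zero))] at hdvd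
  exact (pow_dvd_pow_of_dvd X_dvd_stripRoot _).trans hdvd

end ClosedForms

theorem superCatalan_three_interpretation (n : ℕ) (hn : 1 ≤ n) :
    superCatalan 3 (n + 1) =
      (N3 n : ℚ) + 2 * (A 1 n : ℚ) + 2 * (A 2 n : ℚ) + (A 3 n : ℚ) + (A 5 n : ℚ) := by
  have remainder_coeff := X_pow_dvd_iff.1 (X_pow_dvd_sub_sum_tripleSeries n) (2 * n) (by omega)
  have coeff_two_mul (f : ℚ⟦X⟧) : coeff (2 * n) (2 * f) = 2 * coeff (2 * n) f := by
    rw [two_mul f, map_add, ← two_mul]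
  have coeff_one_eq_zero : coeff (2 * n) (1 : ℚ⟦X⟧) = 0 := by
    rw [coeff_one, if_neg (by omega)]
  simp only [map_add, map_sub, coeff_two_mul, coeff_stripRoot_polynomial, coeff_one_eq_zero,
    ← N3_eq_coeff, ← A_eq_coeff] at remainder_coeff
  linarith
end
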